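/- arXiv:1103.3938 — 6 statements merged into one kernel-verified Lean document; each statement's English description precedes it below -/
import Mathlib

section
/- Let ≼ be a comparative probability order on [n]. Then ≼ is representable if and only if there do not exist k ≥ 1 and subsets A₁,…,A_k, B₁,…,B_k of [n] with A_i ≺ B_i for every i = 1,…,k such that (A₁,…,A_k; B₁,…,B_k) is a trading transform, i.e., every element of [n] belongs to exactly as many of the A_j as of the B_j. -/
open Finset

/-- The strict part of a (total antisymmetric) order on subsets. -/
def cpLT {n : ℕ} (le : Finset (Fin n) → Finset (Fin n) → Prop)
    (A B : Finset (Fin n)) : Prop :=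
  le A B ∧ A ≠ B

/-- `le` is a comparative probability order on `[n]`: a linear (total,
antisymmetric, transitive) order on the powerset of `[n]` with `∅ ≺ A` for
nonempty `A`, satisfying de Finetti's axiom. -/
def IsCPO {n : ℕ} (le : Finset (Fin n) → Finset (Fin n) → Prop) : Prop :=
  (∀ A B, le A B ∨ le B A) ∧
  (∀ A B, le A B → le B A → A = B) ∧
  (∀ A B C, le A B → le B C → le A C) ∧
  (∀ A : Finset (Fin n), A ≠ ∅ → cpLT le ∅ A) ∧
  (∀ A B C : Finset (Fin n), Disjoint (A ∪ B) C → (le A B ↔ le (A ∪ C) (B ∪ C)))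

/-- `(A,B)` is a critical pair: disjoint, `A ≺ B`, and no `C` with `A ≺ C ≺ B`. -/
def Critical {n : ℕ} (le : Finset (Fin n) → Finset (Fin n) → Prop)
    (A B : Finset (Fin n)) : Prop :=
  Disjoint A B ∧ cpLT le A B ∧ ¬ ∃ C, cpLT le A C ∧ cpLT le C B

/-- `(A,B)` is a flippable pair: critical, and for every `D` disjoint from
`A ∪ B` the pair `(A ∪ D, B ∪ D)` is adjacent. -/
def Flippable {n : ℕ} (le : Finset (Fin n) → Finset (Fin n) → Prop)
    (A B : Finset (Fin n)) : Prop :=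
  Critical le A B ∧
  ∀ D : Finset (Fin n), Disjoint D (A ∪ B) →
    ¬ ∃ C, cpLT le (A ∪ D) C ∧ cpLT le C (B ∪ D)

/-- The set of flippable pairs of an order. -/
def FlippablePairs {n : ℕ} (le : Finset (Fin n) → Finset (Fin n) → Prop) :
    Set (Finset (Fin n) × Finset (Fin n)) :=
  {p | Flippable le p.1 p.2}

/-- `le` is (additively) representable by a positive utility vector. -/
def Representable {n : ℕ} (le : Finset (Fin n) → Finset (Fin n) → Prop) : Prop :=
  ∃ u : Fin n → ℝ, (∀ i, 0 < u i) ∧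
    ∀ A B : Finset (Fin n), le A B ↔ ∑ i ∈ A, u i ≤ ∑ i ∈ B, u i

/-- `(X, Y) = (A ∪ D, B ∪ D)` for some `D` disjoint from `A ∪ B`. -/
def FlipRel {n : ℕ} (A B X Y : Finset (Fin n)) : Prop :=
  ∃ D : Finset (Fin n), Disjoint D (A ∪ B) ∧ X = A ∪ D ∧ Y = B ∪ D

/-- The relation obtained from `le` by flipping over the pair `(A,B)`:
all comparisons between `A ∪ D` and `B ∪ D` (for `D` disjoint from `A ∪ B`)
are reversed, all other comparisons are kept. -/
def flipOrder {n : ℕ} (le : Finset (Fin n) → Finset (Fin n) → Prop)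
    (A B : Finset (Fin n)) : Finset (Fin n) → Finset (Fin n) → Prop :=
  fun X Y => (le X Y ∧ ¬ FlipRel A B X Y) ∨ FlipRel A B Y X

/-- Utility (sum of weights) of a subset. -/
def usum {k : ℕ} (m : Fin k → ℕ) (A : Finset (Fin k)) : ℕ := ∑ i ∈ A, m i

/-- The order on subsets induced by a utility vector. -/
def uord {k : ℕ} (m : Fin k → ℕ) : Finset (Fin k) → Finset (Fin k) → Prop :=
  fun A B => usum m A ≤ usum m B

/-
A utility vector represents `≼` exactly when the linear functional it defines is positive on every
difference `χ_B - χ_A` of characteristic vectors with `A ≺ B`. By Gordan's alternative over `ℚ`,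
either such a functional exists, or `0` is a rational convex combination of these differences. In
the second case clearing denominators turns the combination into a vanishing sum of finitely many
differences, repetitions allowed, and this is a trading transform.
-/

section Gordan

variable {K V ι : Type*} [Field K] [LinearOrder K] [IsStrictOrderedRing K] [AddCommGroup V]
  [Module K V]

theorem exists_forall_mul_add_pos {T : Set ι} (hT : T.Finite) {g : ι → K}
    (hg : ∀ s ∈ T, 0 < g s) (h : ι → K) : ∃ N : K, ∀ s ∈ T, 0 < N * g s + h s := by
  obtain ⟨N, hN⟩ := (hT.image fun s ↦ (1 - h s) / g s).bddAbove
  refine ⟨N, fun s hs ↦ ?_⟩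
  have hNs : 1 - h s ≤ N * g s := (div_le_iff₀ (hg s hs)).1 (hN (Set.mem_image_of_mem _ hs))
  linarith

theorem zero_mem_convexHull_insert_of_smul_mem {S : Set V} {a : V} {t : K} (ht : t ≤ 0)
    (h : t • a ∈ convexHull K S) : 0 ∈ convexHull K (insert a S) := by
  have ha : a ∈ convexHull K (insert a S) := subset_convexHull K _ (Set.mem_insert a S)
  have hta : t • a ∈ convexHull K (insert a S) := convexHull_mono (Set.subset_insert a S) h
  have hray : SameRay K (0 - a) (t • a - 0) := by
    simpa using SameRay.sameRay_nonneg_smul_right (R := K) (-a) (neg_nonneg.2 ht)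
  exact (convex_convexHull K _).segment_subset ha hta (mem_segment_iff_sameRay.2 hray)

theorem pos_of_mem_convexHull {S : Set V} {f : Module.Dual K V} (hf : ∀ x ∈ S, 0 < f x) {v : V}
    (hv : v ∈ convexHull K S) : 0 < f v :=
  convexHull_min hf (convex_halfSpace_gt f.isLinear 0) hv

theorem zero_mem_convexHull_or_exists_dual_pos {T : Set ι} (hT : T.Finite) (w : ι → V) :
    0 ∈ convexHull K (w '' T) ∨ ∃ f : Module.Dual K V, ∀ s ∈ T, 0 < f (w s) := by
  induction T, hT using Set.Finite.induction_on generalizing w with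
  | empty => exact Or.inr ⟨0, by simp⟩
  | @insert a T _ hT ih =>
    rw [Set.image_insert_eq]
    rcases eq_or_ne (w a) 0 with hwa | hwa
    · exact Or.inl (subset_convexHull K _ (Set.mem_insert_iff.2 (Or.inl hwa.symm)))
    obtain ⟨h, hh⟩ : ∃ h : Module.Dual K V, h (w a) = 1 :=
      Module.Projective.exists_dual_eq_one K hwa
    -- The projection onto `ker h` along `w a` kills `w a`, leaving only the sign of `h` to settle.
    let π : V →ₗ[K] V := LinearMap.id - h.smulRight (w a)
    have hπ (v : V) : π v = v - h v • w a := rfl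
    rcases ih (π ∘ w) with hzero | ⟨g, hg⟩
    · rw [Set.image_comp, ← π.image_convexHull] at hzero
      obtain ⟨v, hv, hπv⟩ := hzero
      have hva : v = h v • w a := sub_eq_zero.1 hπv
      rcases le_or_gt (h v) 0 with hle | hlt
      · exact Or.inl (zero_mem_convexHull_insert_of_smul_mem hle (hva ▸ hv))
      rcases ih w with hzero | ⟨f, hf⟩
      · exact Or.inl (convexHull_mono (Set.subset_insert _ _) hzero)
      have hfv : 0 < f v := pos_of_mem_convexHull (Set.forall_mem_image.2 hf) hv
      rw [hva, map_smul, smul_eq_mul] at hfv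
      exact Or.inr ⟨f, Set.forall_mem_insert.2 ⟨(pos_iff_pos_of_mul_pos hfv).1 hlt, hf⟩⟩
    · obtain ⟨N, hN⟩ := exists_forall_mul_add_pos hT hg (h ∘ w)
      refine Or.inr ⟨N • g ∘ₗ π + h, Set.forall_mem_insert.2 ⟨?_, hN⟩⟩
      simp [hπ, hh]

end Gordan

section RationalConvexHull

theorem exists_nat_eq_mul_of_nonneg {ι : Type*} [Finite ι] {w : ι → ℚ} (hw : ∀ i, 0 ≤ w i) :
    ∃ (D : ℕ) (m : ι → ℕ), 0 < D ∧ ∀ i, (m i : ℚ) = D * w i := by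
  classical
  have := Fintype.ofFinite ι
  refine ⟨∏ i, (w i).den, fun i ↦ (∏ j ∈ univ.erase i, (w j).den) * (w i).num.toNat,
    Finset.prod_pos fun i _ ↦ (w i).den_pos, fun i ↦ ?_⟩
  have hnum : ((w i).num.toNat : ℚ) = (w i).den * w i := by
    rw [Rat.den_mul_eq_num]
    exact_mod_cast Int.toNat_of_nonneg (Rat.num_nonneg.2 (hw i))
  rw [← Finset.prod_erase_mul univ _ (mem_univ i)]
  push_cast
  rw [hnum, mul_assoc]

theorem exists_fin_sum_eq_nsmul_of_mem_convexHull {V : Type*} [AddCommGroup V] [Module ℚ V]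
    {S : Set V} {x : V} (hx : x ∈ convexHull ℚ S) :
    ∃ (k : ℕ) (v : Fin k → V), 0 < k ∧ (∀ j, v j ∈ S) ∧ ∑ j, v j = k • x := by
  obtain ⟨ι, _, w, z, hw₀, hw₁, hz, rfl⟩ := mem_convexHull_iff_exists_fintype.1 hx
  obtain ⟨k, m, hk, hm⟩ := exists_nat_eq_mul_of_nonneg hw₀
  have hcard : Fintype.card (Σ i, Fin (m i)) = k := by
    have : ∑ i, (m i : ℚ) = k := by simp only [hm, ← Finset.mul_sum, hw₁, mul_one]
    rw [Fintype.card_sigma]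
    simpa using mod_cast this
  let e := (Fintype.equivFinOfCardEq hcard).symm
  refine ⟨k, fun j ↦ z (e j).1, hk, fun j ↦ hz _, ?_⟩
  calc ∑ j, z (e j).1 = ∑ i, m i • z i := by
        rw [e.sum_comp fun p ↦ z p.1, Fintype.sum_sigma]
        simp
    _ = k • ∑ i, w i • z i := by
        simp only [Finset.smul_sum, ← Nat.cast_smul_eq_nsmul ℚ, smul_smul, hm]

end RationalConvexHull

section TradingTransform

variable {α ι : Type*} [DecidableEq α] [Fintype ι]

/-- `(A, B)` is a trading transform: every element lies in as many sets of the family `A` as of the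
family `B`. Families are indexed by an arbitrary finite type. -/
def IsTradingTransform (A B : ι → Finset α) : Prop :=
  ∀ i, #{j | i ∈ A j} = #{j | i ∈ B j}

theorem isTradingTransform_iff_sum_val_eq {A B : ι → Finset α} :
    IsTradingTransform A B ↔ ∑ j, (A j).val = ∑ j, (B j).val := by
  simp only [Multiset.ext, Multiset.count_sum', Multiset.count_eq_of_nodup (nodup _), mem_val,
    sum_boole, Nat.cast_id, IsTradingTransform]

/-- The characteristic vector `χ_A` in `ℚ^α`, written in the standard basis. -/
def charVec (A : Finset α) : α → ℚ :=
  ∑ i ∈ A, Pi.single i 1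

theorem map_charVec {M : Type*} [AddCommMonoid M] [Module ℚ M] (f : (α → ℚ) →ₗ[ℚ] M)
    (A : Finset α) : f (charVec A) = ∑ i ∈ A, f (Pi.single i 1) :=
  map_sum f _ A

theorem sum_charVec_apply (A : ι → Finset α) (i : α) :
    (∑ j, charVec (A j)) i = #{j | i ∈ A j} := by
  simp [charVec, Finset.sum_apply, Pi.single_apply]

theorem isTradingTransform_iff_sum_charVec_eq {A B : ι → Finset α} :
    IsTradingTransform A B ↔ ∑ j, charVec (A j) = ∑ j, charVec (B j) := by
  simp only [funext_iff, sum_charVec_apply, Nat.cast_inj, IsTradingTransform]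

theorem IsTradingTransform.sum_sum_eq {M : Type*} [AddCommMonoid M] {A B : ι → Finset α}
    (h : IsTradingTransform A B) (u : α → M) :
    ∑ j, ∑ i ∈ A j, u i = ∑ j, ∑ i ∈ B j, u i := by
  let φ : Multiset α →+ M := Multiset.sumAddMonoidHom.comp (Multiset.mapAddMonoidHom u)
  have hφ : φ (∑ j, (A j).val) = φ (∑ j, (B j).val) :=
    congrArg φ (isTradingTransform_iff_sum_val_eq.1 h)
  rwa [map_sum, map_sum] at hφ

theorem IsTradingTransform.exists_sum_le {M : Type*} [AddCommMonoid M] [LinearOrder M]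
    [IsOrderedCancelAddMonoid M] [Nonempty ι] {A B : ι → Finset α}
    (h : IsTradingTransform A B) (u : α → M) : ∃ j, ∑ i ∈ B j, u i ≤ ∑ i ∈ A j, u i := by
  simpa using Finset.exists_le_of_sum_le univ_nonempty (h.sum_sum_eq u).ge

theorem exists_isTradingTransform_or_exists_sum_lt [Finite α] (r : Finset α → Finset α → Prop) :
    (∃ (k : ℕ) (A B : Fin k → Finset α),
      0 < k ∧ (∀ j, r (A j) (B j)) ∧ IsTradingTransform A B) ∨
    ∃ u : α → ℚ, ∀ A B, r A B → ∑ i ∈ A, u i < ∑ i ∈ B, u i := by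
  rcases zero_mem_convexHull_or_exists_dual_pos (K := ℚ)
    (Set.toFinite {p : Finset α × Finset α | r p.1 p.2})
    (fun p ↦ charVec p.2 - charVec p.1) with hzero | ⟨f, hf⟩
  · obtain ⟨k, v, hk, hv, hsum⟩ := exists_fin_sum_eq_nsmul_of_mem_convexHull hzero
    choose p hp hpv using hv
    refine Or.inl ⟨k, fun j ↦ (p j).1, fun j ↦ (p j).2, hk, hp, ?_⟩
    simp only [← hpv, sum_sub_distrib, smul_zero] at hsum
    exact isTradingTransform_iff_sum_charVec_eq.2 (sub_eq_zero.1 hsum).symm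
  · refine Or.inr ⟨fun i ↦ f (Pi.single i 1), fun A B hAB ↦ ?_⟩
    have hpos : 0 < f (charVec B - charVec A) := hf (A, B) hAB
    rwa [map_sub, sub_pos, map_charVec, map_charVec] at hpos

end TradingTransform

theorem le_iff_sum_le_of_sum_lt {α M : Type*} [AddCommMonoid M] [LinearOrder M]
    {le : Finset α → Finset α → Prop} (htotal : ∀ A B, le A B ∨ le B A) {u : α → M}
    (hu : ∀ A B, le A B ∧ A ≠ B → ∑ i ∈ A, u i < ∑ i ∈ B, u i) (A B : Finset α) :
    le A B ↔ ∑ i ∈ A, u i ≤ ∑ i ∈ B, u i := by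
  rcases eq_or_ne A B with rfl | hne
  · simpa using htotal A A
  refine ⟨fun hAB ↦ (hu A B ⟨hAB, hne⟩).le, fun hsum ↦ (htotal A B).resolve_right fun hBA ↦ ?_⟩
  exact hsum.not_gt (hu B A ⟨hBA, hne.symm⟩)

theorem stmt0_general {α : Type*} [DecidableEq α] [Finite α] {le : Finset α → Finset α → Prop}
    (htotal : ∀ A B, le A B ∨ le B A) (hanti : ∀ A B, le A B → le B A → A = B)
    (hempty : ∀ i, le ∅ {i}) :
    (∃ u : α → ℝ, (∀ i, 0 < u i) ∧ ∀ A B, le A B ↔ ∑ i ∈ A, u i ≤ ∑ i ∈ B, u i) ↔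
      ¬ ∃ (k : ℕ) (_ : 1 ≤ k) (A B : Fin k → Finset α),
        (∀ j, le (A j) (B j) ∧ A j ≠ B j) ∧ IsTradingTransform A B := by
  constructor
  · rintro ⟨u, -, hu⟩ ⟨k, hk, A, B, hlt, htrade⟩
    have : NeZero k := ⟨Nat.one_le_iff_ne_zero.1 hk⟩
    obtain ⟨j, hj⟩ := htrade.exists_sum_le u
    exact (hlt j).2 (hanti _ _ (hlt j).1 ((hu _ _).2 hj))
  · intro hno
    rcases exists_isTradingTransform_or_exists_sum_lt fun A B ↦ le A B ∧ A ≠ B with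
      ⟨k, A, B, hk, hlt, htrade⟩ | ⟨u, hu⟩
    · exact absurd ⟨k, hk, A, B, hlt, htrade⟩ hno
    have huReal (A B : Finset α) (hAB : le A B ∧ A ≠ B) :
        ∑ i ∈ A, (u i : ℝ) < ∑ i ∈ B, (u i : ℝ) := mod_cast hu A B hAB
    refine ⟨fun i ↦ u i, fun i ↦ ?_, le_iff_sum_le_of_sum_lt htotal huReal⟩
    simpa using huReal ∅ {i} ⟨hempty i, (singleton_ne_empty i).symm⟩

/-- Kraft–Pratt–Seidenberg: a comparative probability order is representable iff
there is no trading transform `(A₁,…,A_k; B₁,…,B_k)` with `A_i ≺ B_i` for all `i`. -/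
theorem stmt0 {n : ℕ} (le : Finset (Fin n) → Finset (Fin n) → Prop) (h : IsCPO le) :
    Representable le ↔
      ¬ ∃ (k : ℕ) (_ : 1 ≤ k) (A B : Fin k → Finset (Fin n)),
        (∀ j : Fin k, cpLT le (A j) (B j)) ∧
        (∀ i : Fin n,
          (Finset.univ.filter (fun j => i ∈ A j)).card =
          (Finset.univ.filter (fun j => i ∈ B j)).card) :=
  let ⟨htotal, hanti, _, hempty, _⟩ := h
  stmt0_general htotal hanti fun i ↦ (hempty {i} (singleton_ne_empty i)).1
end

section
/- Let ≼ be a comparative probability order on [n] and let A, B be disjoint subsets of [n] with A ≺ B. Then (A,B) is a flippable pair for ≼ if and only if the vector χ_B − χ_A is irreducible in the discrete cone C(≼), i.e., there do not exist vectors u, v ∈ C(≼), each different from χ_B − χ_A, with χ_B − χ_A = u + v. -/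
open Finset

/-- Characteristic vector of a subset of `[n]`. -/
def chi {n : ℕ} (S : Finset (Fin n)) : Fin n → ℤ := fun i => if i ∈ S then 1 else 0

/-- The discrete cone of an order: all vectors `χ_B − χ_A` with `A ≼ B`. -/
def cone {n : ℕ} (le : Finset (Fin n) → Finset (Fin n) → Prop) : Set (Fin n → ℤ) :=
  {x | ∃ A B : Finset (Fin n), le A B ∧ x = chi B - chi A}

/-!
For a relation satisfying de Finetti's axiom, whether `A ≼ B` depends only on `χ_B − χ_A`, so a
vector of the cone may be written as a difference of characteristic vectors in any convenient way.
Sets `A ∪ D ≺ C ≺ B ∪ D` therefore split `χ_B − χ_A` as `(χ_C − χ_{A ∪ D}) + (χ_{B ∪ D} − χ_C)`.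
Conversely, given `χ_B − χ_A = (χ_Q − χ_P) + v` with `P`, `Q` disjoint and `v` a vector with entries
in `{−1, 0, 1}`, comparing coordinates shows that `P` misses `B` and `Q` misses `A`, so `D = P \ A`
and `C = (A \ P) ∪ Q` present the two summands in this form.
-/

section Chi

variable {n : ℕ} {A B P Q R S : Finset (Fin n)}

theorem chi_injective : Function.Injective (chi (n := n)) := by
  intro P Q hPQ
  ext i
  have hi := congrFun hPQ i
  grind [chi]

theorem chi_union (hPQ : Disjoint P Q) : chi (P ∪ Q) = chi P + chi Q := by
  ext i
  have hi : i ∈ P → i ∉ Q := fun hP ↦ disjoint_left.1 hPQ hP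
  grind [chi, Pi.add_apply]

theorem chi_union_sub_chi_union {D : Finset (Fin n)} (hD : Disjoint D (A ∪ B)) :
    chi (B ∪ D) - chi (A ∪ D) = chi B - chi A := by
  obtain ⟨hDA, hDB⟩ := disjoint_union_right.1 hD
  rw [chi_union hDA.symm, chi_union hDB.symm, add_sub_add_right_eq_sub]

theorem chi_sdiff_eq_posPart (A B : Finset (Fin n)) : chi (B \ A) = (chi B - chi A)⁺ := by
  ext i
  by_cases hA : i ∈ A <;> by_cases hB : i ∈ B <;> simp [chi, Pi.posPart_apply, hA, hB]

theorem chi_sdiff_sub_chi_sdiff (A B : Finset (Fin n)) :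
    chi (B \ A) - chi (A \ B) = chi B - chi A := by
  rw [chi_sdiff_eq_posPart, chi_sdiff_eq_posPart, ← neg_sub (chi B), posPart_neg,
    posPart_sub_negPart]

theorem sdiff_eq_sdiff_of_chi_sub_chi_eq (h : chi B - chi A = chi Q - chi P) :
    B \ A = Q \ P :=
  chi_injective <| by rw [chi_sdiff_eq_posPart, chi_sdiff_eq_posPart, h]

theorem disjoint_of_chi_sub_chi_eq_add (hAB : Disjoint A B) (hPQ : Disjoint P Q)
    (h : chi B - chi A = chi Q - chi P + (chi S - chi R)) : Disjoint P B := by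
  refine disjoint_left.2 fun i hP hB ↦ ?_
  have hA : i ∉ A := disjoint_right.1 hAB hB
  have hQ : i ∉ Q := disjoint_left.1 hPQ hP
  have hi := congrFun h i
  simp only [chi, Pi.add_apply, Pi.sub_apply, hA, hB, hP, hQ, if_true, if_false] at hi
  split_ifs at hi <;> omega

theorem exists_chi_sub_chi_of_eq_add (hAB : Disjoint A B)
    (h : chi B - chi A = chi Q - chi P + (chi S - chi R)) :
    ∃ C D, Disjoint D (A ∪ B) ∧ chi Q - chi P = chi C - chi (A ∪ D) ∧
      chi S - chi R = chi (B ∪ D) - chi C := by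
  rw [← chi_sdiff_sub_chi_sdiff P Q] at h ⊢
  set P' := P \ Q
  set Q' := Q \ P
  have hPQ : Disjoint P' Q' := disjoint_sdiff_sdiff
  have hPB : Disjoint P' B := disjoint_of_chi_sub_chi_eq_add hAB hPQ h
  have hQA : Disjoint Q' A :=
    disjoint_of_chi_sub_chi_eq_add (R := S) (S := R) hAB.symm hPQ.symm
      (by linear_combination -h)
  have hD : Disjoint (P' \ A) (A ∪ B) :=
    disjoint_union_right.2 ⟨sdiff_disjoint, hPB.mono_left sdiff_subset⟩
  have hu : chi Q' - chi P' = chi (A \ P' ∪ Q') - chi (A ∪ P' \ A) := by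
    rw [union_sdiff_self_eq_union, ← sdiff_union_self_eq_union (s := A),
      chi_union (hQA.symm.mono_left sdiff_subset), chi_union sdiff_disjoint,
      add_sub_add_left_eq_sub]
  refine ⟨A \ P' ∪ Q', P' \ A, hD, hu, ?_⟩
  linear_combination -h - hu - chi_union_sub_chi_union hD

end Chi

/-- De Finetti's axiom for a relation on subsets: adjoining the same set to two sets that are
disjoint from it does not change how they compare. The relation is not assumed to be an order. -/
def DeFinetti {n : ℕ} (le : Finset (Fin n) → Finset (Fin n) → Prop) : Prop :=
  ∀ A B C : Finset (Fin n), Disjoint (A ∪ B) C → (le A B ↔ le (A ∪ C) (B ∪ C))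

section Cone

variable {n : ℕ} {le : Finset (Fin n) → Finset (Fin n) → Prop} {A B : Finset (Fin n)}

theorem IsCPO.deFinetti (h : IsCPO le) : DeFinetti le :=
  h.2.2.2.2

namespace DeFinetti

theorem sdiff_iff (h : DeFinetti le) : le (A \ B) (B \ A) ↔ le A B := by
  have hdisj : Disjoint (A \ B ∪ B \ A) (A ∩ B) :=
    disjoint_union_left.2 ⟨disjoint_sdiff_inter A B, inter_comm A B ▸ disjoint_sdiff_inter B A⟩
  rw [h _ _ _ hdisj, sdiff_union_inter, inter_comm, sdiff_union_inter]

theorem chi_sub_chi_mem_cone_iff (h : DeFinetti le) : chi B - chi A ∈ cone le ↔ le A B := by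
  refine ⟨?_, fun hAB ↦ ⟨A, B, hAB, rfl⟩⟩
  rintro ⟨P, Q, hPQ, heq⟩
  have hneg : chi A - chi B = chi P - chi Q := by rw [← neg_sub, heq, neg_sub]
  rwa [← h.sdiff_iff, sdiff_eq_sdiff_of_chi_sub_chi_eq heq,
    sdiff_eq_sdiff_of_chi_sub_chi_eq hneg, h.sdiff_iff]

theorem exists_between_iff_exists_add (h : DeFinetti le) (hAB : Disjoint A B) :
    (∃ D, Disjoint D (A ∪ B) ∧ ∃ C, cpLT le (A ∪ D) C ∧ cpLT le C (B ∪ D)) ↔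
      ∃ u ∈ cone le, ∃ v ∈ cone le,
        u ≠ chi B - chi A ∧ v ≠ chi B - chi A ∧ chi B - chi A = u + v := by
  constructor
  · rintro ⟨D, hD, C, ⟨hleAC, hneAC⟩, hleCB, hneCB⟩
    rw [← chi_union_sub_chi_union hD]
    refine ⟨_, ⟨_, _, hleAC, rfl⟩, _, ⟨_, _, hleCB, rfl⟩, ?_, ?_, (sub_add_sub_cancel' _ _ _).symm⟩
    · rwa [Ne, sub_left_inj, chi_injective.eq_iff]
    · rwa [Ne, sub_right_inj, chi_injective.eq_iff, eq_comm]
  · rintro ⟨u, hu, v, hv, hu_ne, hv_ne, hadd⟩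
    obtain ⟨P, Q, -, rfl⟩ := id hu
    obtain ⟨R, S, -, rfl⟩ := id hv
    obtain ⟨C, D, hD, hQP, hSR⟩ := exists_chi_sub_chi_of_eq_add hAB hadd
    rw [hQP, h.chi_sub_chi_mem_cone_iff] at hu
    rw [hSR, h.chi_sub_chi_mem_cone_iff] at hv
    rw [hQP, ← chi_union_sub_chi_union hD, Ne, sub_left_inj, chi_injective.eq_iff] at hu_ne
    rw [hSR, ← chi_union_sub_chi_union hD, Ne, sub_right_inj, chi_injective.eq_iff] at hv_ne
    exact ⟨D, hD, C, ⟨hu, Ne.symm hv_ne⟩, hv, hu_ne⟩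

end DeFinetti

theorem flippable_iff_forall_not_between (hd : Disjoint A B) (hAB : cpLT le A B) :
    Flippable le A B ↔
      ∀ D, Disjoint D (A ∪ B) → ¬ ∃ C, cpLT le (A ∪ D) C ∧ cpLT le C (B ∪ D) := by
  refine ⟨And.right, fun hD ↦ ⟨⟨hd, hAB, ?_⟩, hD⟩⟩
  simpa only [union_empty] using hD ∅ (disjoint_empty_left _)

theorem stmt1_general (h : DeFinetti le) (hd : Disjoint A B) (hAB : cpLT le A B) :
    Flippable le A B ↔
      ¬ ∃ u ∈ cone le, ∃ v ∈ cone le,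
        u ≠ chi B - chi A ∧ v ≠ chi B - chi A ∧ chi B - chi A = u + v := by
  rw [flippable_iff_forall_not_between hd hAB, ← h.exists_between_iff_exists_add hd]
  simp only [not_exists, not_and]

end Cone

/-- A pair `(A,B)` of disjoint subsets with `A ≺ B` is flippable iff
`χ_B − χ_A` is irreducible in the discrete cone `C(≼)`. -/
theorem stmt1 {n : ℕ} (le : Finset (Fin n) → Finset (Fin n) → Prop) (h : IsCPO le)
    (A B : Finset (Fin n)) (hd : Disjoint A B) (hAB : cpLT le A B) :
    Flippable le A B ↔
      ¬ ∃ u ∈ cone le, ∃ v ∈ cone le,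
        u ≠ chi B - chi A ∧ v ≠ chi B - chi A ∧ chi B - chi A = u + v :=
  stmt1_general h.deFinetti hd hAB
end

section
/- Let ≼ be a comparative probability order on [n] and let (A,B) be a flippable pair for ≼ with A ≠ ∅. Define the relation ≼′ on the powerset of [n] by reversing exactly the comparisons between A∪D and B∪D for every D ⊆ [n] disjoint from A∪B (so B∪D ≺′ A∪D for all such D) and keeping all other comparisons of ≼ unchanged. Then ≼′ is again a comparative probability order on [n]. -/
open Finset

/-!
For disjoint `A` and `B`, the pairs `(A ∪ D, B ∪ D)` with `D` disjoint from `A ∪ B` are exactly the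
pairs `(X, Y)` with `X \ Y = A` and `Y \ X = B`. This condition is insensitive to adding a common
set disjoint from `X ∪ Y`, so flipping respects de Finetti's axiom. It also shows that `(X, Y)` and
`(Y, Z)` are never both flipped: `X \ Y = A` makes `A` disjoint from `Y`, while `Y \ Z = A` puts it
inside `Y`, and `A ≠ ∅`. Flipping therefore exchanges pairwise disjoint pairs of neighbours in a
linear order, which again gives a linear order.
-/

section ReverseOn

variable {α : Type*} {r s : α → α → Prop} {x y z : α}

/-- `y` equals or immediately succeeds `x` in `r`: the counterpart of `WCovBy` for an unbundled
relation. -/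
def RelWCovBy (r : α → α → Prop) (x y : α) : Prop :=
  r x y ∧ ∀ z, r x z → r z y → z = x ∨ z = y

/-- The relation `r` with its comparisons on the pairs of `s` reversed: the order-theoretic content
of flipping. By definition, `flipOrder le A B` is `reverseOn le (FlipRel A B)`. -/
def reverseOn (r s : α → α → Prop) (x y : α) : Prop :=
  (r x y ∧ ¬ s x y) ∨ s y x

theorem reverseOn_total [Std.Total r] (x y : α) : reverseOn r s x y ∨ reverseOn r s y x := by
  have := total_of r x y
  unfold reverseOn
  tauto

theorem reverseOn_antisymm [Std.Antisymm r] (hchain : ∀ x y z, s x y → ¬ s y z)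
    (hxy : reverseOn r s x y) (hyx : reverseOn r s y x) : x = y := by
  rcases hxy with ⟨rxy, nxy⟩ | syx <;> rcases hyx with ⟨ryx, nyx⟩ | sxy
  · exact antisymm rxy ryx
  · exact absurd sxy nxy
  · exact absurd syx nyx
  · exact absurd syx (hchain _ _ _ sxy)

theorem reverseOn_of_rel_of_swap [Std.Total r] (hcov : ∀ x y, s x y → RelWCovBy r x y)
    (hchain : ∀ x y z, s x y → ¬ s y z) (rxy : r x y) (nxy : ¬ s x y) (szy : s z y) :
    reverseOn r s x z := by
  rcases total_of r x z with rxz | rzx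
  · exact Or.inl ⟨rxz, fun sxz => hchain _ _ _ sxz szy⟩
  · rcases (hcov z y szy).2 x rzx rxy with rfl | rfl
    · exact absurd szy nxy
    · exact Or.inr szy

theorem reverseOn_of_swap_of_rel [Std.Total r] (hcov : ∀ x y, s x y → RelWCovBy r x y)
    (hchain : ∀ x y z, s x y → ¬ s y z) (syx : s y x) (ryz : r y z) (nyz : ¬ s y z) :
    reverseOn r s x z := by
  rcases total_of r x z with rxz | rzx
  · exact Or.inl ⟨rxz, hchain _ _ _ syx⟩
  · rcases (hcov y x syx).2 z ryz rzx with rfl | rfl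
    · exact Or.inr syx
    · exact absurd syx nyz

theorem reverseOn_trans [IsTrans α r] [Std.Total r] (hcov : ∀ x y, s x y → RelWCovBy r x y)
    (hchain : ∀ x y z, s x y → ¬ s y z) (hxy : reverseOn r s x y) (hyz : reverseOn r s y z) :
    reverseOn r s x z := by
  rcases hxy with ⟨rxy, nxy⟩ | syx <;> rcases hyz with ⟨ryz, nyz⟩ | szy
  · refine Or.inl ⟨trans_of r rxy ryz, fun sxz => ?_⟩
    rcases (hcov x z sxz).2 y rxy ryz with rfl | rfl
    · exact nyz sxz
    · exact nxy sxz
  · exact reverseOn_of_rel_of_swap hcov hchain rxy nxy szy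
  · exact reverseOn_of_swap_of_rel hcov hchain syx ryz nyz
  · exact absurd syx (hchain _ _ _ szy)

theorem isLinearOrder_reverseOn [IsLinearOrder α r] (hcov : ∀ x y, s x y → RelWCovBy r x y)
    (hchain : ∀ x y z, s x y → ¬ s y z) : IsLinearOrder α (reverseOn r s) where
  refl x := (reverseOn_total x x).elim id id
  trans _ _ _ := reverseOn_trans hcov hchain
  antisymm _ _ := reverseOn_antisymm hchain
  total := reverseOn_total

end ReverseOn

section GeneralizedBooleanAlgebra

variable {α : Type*} [GeneralizedBooleanAlgebra α] {r : α → α → Prop} {a b c x y z : α}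

/-- `(x, y)` arises from `(a, b)` by joining a common element disjoint from both. On
`Finset (Fin n)` this unfolds to `FlipRel`. -/
def IsDisjointTranslate (a b x y : α) : Prop :=
  ∃ d, Disjoint d (a ⊔ b) ∧ x = a ⊔ d ∧ y = b ⊔ d

theorem sup_sdiff_sup_right_of_disjoint (hxc : Disjoint x c) : (x ⊔ c) \ (y ⊔ c) = x \ y := by
  rw [sup_sdiff, sdiff_eq_bot_iff.2 le_sup_right, sup_bot_eq, sdiff_sup, hxc.sdiff_eq_left,
    inf_eq_left.2 sdiff_le]

theorem isDisjointTranslate_iff_sdiff (hab : Disjoint a b) :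
    IsDisjointTranslate a b x y ↔ x \ y = a ∧ y \ x = b := by
  constructor
  · rintro ⟨d, hd, rfl, rfl⟩
    obtain ⟨hda, hdb⟩ := disjoint_sup_right.1 hd
    exact ⟨(sup_sdiff_sup_right_of_disjoint hda.symm).trans hab.sdiff_eq_left,
      (sup_sdiff_sup_right_of_disjoint hdb.symm).trans hab.sdiff_eq_right⟩
  · rintro ⟨rfl, rfl⟩
    refine ⟨x ⊓ y, disjoint_sup_right.2 ⟨?_, ?_⟩, (sup_sdiff_inf x y).symm, ?_⟩
    · exact disjoint_sdiff_self_right.mono_left inf_le_right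
    · exact disjoint_sdiff_self_right.mono_left inf_le_left
    · rw [inf_comm, sup_sdiff_inf]

theorem isDisjointTranslate_sup_iff (hab : Disjoint a b) (hc : Disjoint (x ⊔ y) c) :
    IsDisjointTranslate a b (x ⊔ c) (y ⊔ c) ↔ IsDisjointTranslate a b x y := by
  obtain ⟨hxc, hyc⟩ := disjoint_sup_left.1 hc
  rw [isDisjointTranslate_iff_sdiff hab, isDisjointTranslate_iff_sdiff hab,
    sup_sdiff_sup_right_of_disjoint hxc, sup_sdiff_sup_right_of_disjoint hyc]

theorem not_isDisjointTranslate_bot_left (ha : a ≠ ⊥) : ¬ IsDisjointTranslate a b ⊥ x := by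
  rintro ⟨d, -, hbot, -⟩
  exact ha (sup_eq_bot_iff.1 hbot.symm).1

theorem not_isDisjointTranslate_chain (hab : Disjoint a b) (ha : a ≠ ⊥)
    (hxy : IsDisjointTranslate a b x y) : ¬ IsDisjointTranslate a b y z := by
  intro hyz
  have hay : Disjoint a y :=
    ((isDisjointTranslate_iff_sdiff hab).1 hxy).1 ▸ disjoint_sdiff_self_left
  have ha_le : a ≤ y := ((isDisjointTranslate_iff_sdiff hab).1 hyz).1 ▸ sdiff_le
  exact ha (hay.eq_bot_of_le ha_le)

/-- Comparative probability orders on a generalized Boolean algebra. Since `r` is antisymmetric,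
`r ⊥ x` for all `x` says that `⊥` lies strictly below every other element. -/
structure IsComparativeProbability (r : α → α → Prop) : Prop extends IsLinearOrder α r where
  bot_rel : ∀ x, r ⊥ x
  rel_sup_iff : ∀ x y c, Disjoint (x ⊔ y) c → (r x y ↔ r (x ⊔ c) (y ⊔ c))

/-- Flippable pairs in a generalized Boolean algebra. Criticality of `(a, b)` itself is the case
`d = ⊥`. -/
structure IsFlippablePair (r : α → α → Prop) (a b : α) : Prop where
  disjoint : Disjoint a b
  relWCovBy_sup : ∀ d, Disjoint d (a ⊔ b) → RelWCovBy r (a ⊔ d) (b ⊔ d)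

theorem stmt2_general (hr : IsComparativeProbability r) (hab : IsFlippablePair r a b)
    (ha : a ≠ ⊥) : IsComparativeProbability (reverseOn r (IsDisjointTranslate a b)) := by
  have := hr.toIsLinearOrder
  have hcov : ∀ x y, IsDisjointTranslate a b x y → RelWCovBy r x y := by
    rintro _ _ ⟨d, hd, rfl, rfl⟩
    exact hab.relWCovBy_sup d hd
  have hchain : ∀ x y z, IsDisjointTranslate a b x y → ¬ IsDisjointTranslate a b y z :=
    fun _ _ _ => not_isDisjointTranslate_chain hab.disjoint ha
  refine { isLinearOrder_reverseOn hcov hchain with bot_rel := ?_, rel_sup_iff := ?_ }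
  · exact fun x => Or.inl ⟨hr.bot_rel x, not_isDisjointTranslate_bot_left ha⟩
  · intro x y c hc
    unfold reverseOn
    rw [hr.rel_sup_iff x y c hc, isDisjointTranslate_sup_iff hab.disjoint hc,
      isDisjointTranslate_sup_iff hab.disjoint (sup_comm x y ▸ hc)]

end GeneralizedBooleanAlgebra

section Finset

variable {n : ℕ} {le : Finset (Fin n) → Finset (Fin n) → Prop} {A B : Finset (Fin n)}

theorem isCPO_iff_isComparativeProbability : IsCPO le ↔ IsComparativeProbability le := by
  constructor
  · rintro ⟨htotal, hantisymm, htrans, hempty, hunion⟩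
    have hrefl : ∀ X, le X X := fun X => (htotal X X).elim id id
    refine { refl := hrefl, trans := htrans, antisymm := hantisymm, total := htotal,
             bot_rel := fun X => ?_, rel_sup_iff := hunion }
    rcases eq_or_ne X ∅ with rfl | hX
    · exact hrefl ∅
    · exact (hempty X hX).1
  · intro h
    exact ⟨h.total, h.antisymm, h.trans, fun X hX => ⟨h.bot_rel X, hX.symm⟩, h.rel_sup_iff⟩

theorem Flippable.isFlippablePair (hf : Flippable le A B) (h : IsComparativeProbability le) :
    IsFlippablePair le A B := by
  obtain ⟨⟨hdisj, hAB, -⟩, hadj⟩ := hf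
  refine ⟨hdisj, fun D hD => ⟨(h.rel_sup_iff A B D hD.symm).1 hAB.1, fun C hAC hCB => ?_⟩⟩
  by_contra! hne
  exact hadj D hD ⟨C, ⟨hAC, hne.1.symm⟩, hCB, hne.2⟩

end Finset

/-- Flipping a comparative probability order over a flippable pair `(A,B)` with
`A ≠ ∅` yields again a comparative probability order. -/
theorem stmt2 {n : ℕ} (le : Finset (Fin n) → Finset (Fin n) → Prop) (h : IsCPO le)
    (A B : Finset (Fin n)) (hf : Flippable le A B) (hA : A ≠ ∅) :
    IsCPO (flipOrder le A B) := by
  have h' := isCPO_iff_isComparativeProbability.1 h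
  exact isCPO_iff_isComparativeProbability.2 (stmt2_general h' (hf.isFlippablePair h') hA)
end

section
/- For every n ≥ 4 there exists a representable comparative probability order ≼ on [n] such that: (a) ≼ has exactly F_{n+1} flippable pairs, where F denotes the Fibonacci sequence with F₁ = F₂ = 1; and (b) for every flippable pair (A,B) of ≼ with A ≠ ∅, the comparative probability order obtained from ≼ by flipping over (A,B) (reversing exactly the comparisons between A∪D and B∪D for every D disjoint from A∪B) is representable. -/
open Finset

/-!
Give the atoms the weights `q, 2, 4, …, 2 ^ k` with `q` odd and `q ≤ 2 ^ k`. All subset sums are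
then distinct, and whenever `A` and `B` differ in weight by more than one, some subset sum falls
strictly between them, possibly after adding the first atom to both. Hence the flippable pairs are
exactly the disjoint pairs whose weights differ by one.

Such a pair is a sign vector with signed sum `1`. Exchanging the roles of `q` and `1` turns these
vectors into the representations of `q` as `∑ i ≤ k, ε i * 2 ^ i` with `ε i ∈ {-1, 0, 1}`. For `q`
the Jacobsthal number `J (k + 1)`, the relation `J (n + 1) = 2 * J n + (-1) ^ n` makes the number of
representations satisfy the Fibonacci recursion.

To represent a flip over `(A, B)`, lower the weights on `B` and raise those on `A` by a common
amount lying between `1 / c` and `1 / (c - 1)` of a unit, where `c = #A + #B`. Only a comparison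
`X ≺ Y` with a weight difference of one in which every element of `A` and `B` counts is reversed,
and these are the comparisons `A ∪ D ≺ B ∪ D`.
-/

section IntegerWeights

variable {n : ℕ} {m : Fin n → ℕ} {A B : Finset (Fin n)}

lemma usum_union (hAB : Disjoint A B) : usum m (A ∪ B) = usum m A + usum m B :=
  Finset.sum_union hAB

lemma usum_empty : usum m ∅ = 0 := Finset.sum_empty

lemma usum_pos (inj : Function.Injective (usum m)) (hA : A ≠ ∅) : 0 < usum m A :=
  Nat.pos_of_ne_zero fun h ↦ hA (inj (h.trans usum_empty.symm))

lemma pos_of_usum_injective (inj : Function.Injective (usum m)) (i : Fin n) : 0 < m i := by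
  simpa only [usum, sum_singleton] using usum_pos inj (singleton_ne_empty i)

lemma cpLT_uord_iff (inj : Function.Injective (usum m)) :
    cpLT (uord m) A B ↔ usum m A < usum m B := by
  rw [lt_iff_le_and_ne, inj.ne_iff]
  rfl

lemma isCPO_uord (inj : Function.Injective (usum m)) : IsCPO (uord m) := by
  refine ⟨fun _ _ ↦ le_total _ _, fun _ _ h₁ h₂ ↦ inj (le_antisymm h₁ h₂),
    fun _ _ _ ↦ le_trans, fun A hA ↦ ?_, fun A B C hC ↦ ?_⟩
  · rw [cpLT_uord_iff inj, usum_empty]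
    exact usum_pos inj hA
  · obtain ⟨hAC, hBC⟩ := disjoint_union_left.1 hC
    simp only [uord, usum_union hAC, usum_union hBC, Nat.add_le_add_iff_right]

lemma representable_of_int {le : Finset (Fin n) → Finset (Fin n) → Prop} (w : Fin n → ℤ)
    (hw : ∀ i, 0 < w i) (hle : ∀ A B, le A B ↔ ∑ i ∈ A, w i ≤ ∑ i ∈ B, w i) :
    Representable le :=
  ⟨fun i ↦ w i, fun i ↦ Int.cast_pos.2 (hw i), fun A B ↦ by
    simpa only [← Int.cast_sum, Int.cast_le] using hle A B⟩

lemma representable_uord (inj : Function.Injective (usum m)) : Representable (uord m) :=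
  representable_of_int (fun i ↦ m i) (fun i ↦ by exact_mod_cast pos_of_usum_injective inj i)
    fun A B ↦ by simp only [uord, usum]; norm_cast

lemma flippable_of_usum_eq_add_one (inj : Function.Injective (usum m)) (hAB : Disjoint A B)
    (hs : usum m B = usum m A + 1) : Flippable (uord m) A B := by
  simp only [Flippable, Critical, cpLT_uord_iff inj]
  refine ⟨⟨hAB, by omega, by omega⟩, fun D hD ⟨C, hAC, hCB⟩ ↦ ?_⟩
  obtain ⟨hDA, hDB⟩ := disjoint_union_right.1 hD
  rw [usum_union hDA.symm] at hAC
  rw [usum_union hDB.symm] at hCB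
  omega

lemma Flippable.usum_lt (inj : Function.Injective (usum m)) (h : Flippable (uord m) A B) :
    usum m A < usum m B :=
  (cpLT_uord_iff inj).1 h.1.2.1

lemma Flippable.not_between (inj : Function.Injective (usum m)) (h : Flippable (uord m) A B)
    {D : Finset (Fin n)} (hD : Disjoint D (A ∪ B)) (C : Finset (Fin n)) :
    ¬(usum m A + usum m D < usum m C ∧ usum m C < usum m B + usum m D) := by
  obtain ⟨hDA, hDB⟩ := disjoint_union_right.1 hD
  rw [← usum_union hDA.symm, ← usum_union hDB.symm, ← cpLT_uord_iff inj, ← cpLT_uord_iff inj]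
  exact fun hC ↦ h.2 D hD ⟨C, hC⟩

end IntegerWeights

section Flip

variable {n : ℕ} {m : Fin n → ℕ} {A B X Y : Finset (Fin n)}

/-- The functional `⟨1_B - 1_A, 1_X⟩`, in whose negative direction the weights are moved in order
to flip over `(A, B)`. -/
def tilt (A B X : Finset (Fin n)) : ℤ := #(X ∩ B) - #(X ∩ A)

lemma sum_tilt_singleton (A B X : Finset (Fin n)) : ∑ i ∈ X, tilt A B {i} = tilt A B X := by
  have card_inter (S : Finset (Fin n)) : ∑ i ∈ X, (#({i} ∩ S) : ℤ) = #(X ∩ S) := by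
    simp [singleton_inter, apply_ite card]
  simp only [tilt, sum_sub_distrib, card_inter]

lemma tilt_sub_tilt_le (A B X Y : Finset (Fin n)) : tilt A B Y - tilt A B X ≤ #A + #B := by
  have hYB : #(Y ∩ B) ≤ #B := card_le_card inter_subset_right
  have hXA : #(X ∩ A) ≤ #A := card_le_card inter_subset_right
  unfold tilt
  omega

lemma tilt_sub_tilt_eq_iff :
    tilt A B Y - tilt A B X = #A + #B ↔ A ⊆ X ∧ B ⊆ Y ∧ Disjoint X B ∧ Disjoint Y A := by
  have subset_iff (S T : Finset (Fin n)) : S ⊆ T ↔ #S ≤ #(T ∩ S) := by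
    rw [← inter_eq_right, eq_iff_card_le_of_subset inter_subset_right]
  have disjoint_iff (S T : Finset (Fin n)) : Disjoint S T ↔ #(S ∩ T) = 0 := by
    rw [card_eq_zero, disjoint_iff_inter_eq_empty]
  have hYB : #(Y ∩ B) ≤ #B := card_le_card inter_subset_right
  have hXA : #(X ∩ A) ≤ #A := card_le_card inter_subset_right
  rw [subset_iff, subset_iff, disjoint_iff, disjoint_iff, tilt, tilt]
  omega

lemma flipRel_iff_sdiff_eq (hAB : Disjoint A B) :
    FlipRel A B X Y ↔ X \ A = Y \ B ∧ A ⊆ X ∧ B ⊆ Y ∧ Disjoint X B ∧ Disjoint Y A := by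
  constructor
  · rintro ⟨D, hD, rfl, rfl⟩
    obtain ⟨hDA, hDB⟩ := disjoint_union_right.1 hD
    refine ⟨?_, subset_union_left, subset_union_left, disjoint_union_left.2 ⟨hAB, hDB⟩,
      disjoint_union_left.2 ⟨hAB.symm, hDA⟩⟩
    rw [union_sdiff_cancel_left hDA.symm, union_sdiff_cancel_left hDB.symm]
  · rintro ⟨hD, hAX, hBY, hXB, -⟩
    refine ⟨X \ A, disjoint_union_right.2 ⟨sdiff_disjoint, hXB.mono_left sdiff_subset⟩,
      (union_sdiff_of_subset hAX).symm, ?_⟩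
    rw [hD, union_sdiff_of_subset hBY]

lemma flipRel_iff_tilt (inj : Function.Injective (usum m)) (hAB : Disjoint A B)
    (hs : usum m B = usum m A + 1) :
    FlipRel A B X Y ↔
      usum m Y = usum m X + 1 ∧ tilt A B Y - tilt A B X = #A + #B := by
  rw [flipRel_iff_sdiff_eq hAB, tilt_sub_tilt_eq_iff, and_congr_left_iff]
  rintro ⟨hAX, hBY, -⟩
  have hX : usum m (X \ A) + usum m A = usum m X := sum_sdiff hAX
  have hY : usum m (Y \ B) + usum m B = usum m Y := sum_sdiff hBY
  rw [← inj.eq_iff]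
  omega

/-- Integral weights representing the flip over `(A, B)`: the weights `m`, moved by
`2 / (2 * c - 1)` against `tilt A B` and scaled by `2 * c - 1`, where `c = #A + #B`. -/
def flipWeight (m : Fin n → ℕ) (A B : Finset (Fin n)) (i : Fin n) : ℤ :=
  (2 * (#A + #B) - 1) * m i - 2 * tilt A B {i}

lemma sum_flipWeight (m : Fin n → ℕ) (A B X : Finset (Fin n)) :
    ∑ i ∈ X, flipWeight m A B i = (2 * (#A + #B) - 1) * usum m X - 2 * tilt A B X := by
  simp only [flipWeight, sum_sub_distrib, ← mul_sum, sum_tilt_singleton, usum, Nat.cast_sum]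

lemma flipWeight_pos (hm : ∀ i, 0 < m i) (hc : 2 ≤ #A + #B) (i : Fin n) :
    0 < flipWeight m A B i := by
  have hi : (1 : ℤ) ≤ m i := by exact_mod_cast hm i
  have hc' : (2 : ℤ) ≤ #A + #B := by exact_mod_cast hc
  have htilt : tilt A B {i} ≤ 1 := by
    have : #({i} ∩ B) ≤ 1 := card_le_card inter_subset_left
    unfold tilt
    omega
  unfold flipWeight
  nlinarith [mul_nonneg (sub_nonneg.2 hc') (sub_nonneg.2 hi)]

lemma two_mul_le_iff_of_abs_le {c d t : ℤ} (hc : 2 ≤ c) (ht : |t| ≤ c) (hd : d = 0 → t = 0) :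
    2 * t ≤ (2 * c - 1) * d ↔ 0 ≤ d ∧ ¬(d = 1 ∧ t = c) ∨ d = -1 ∧ t = -c := by
  obtain ⟨ht₁, ht₂⟩ := abs_le.1 ht
  obtain h | rfl | rfl | rfl | h : d ≤ -2 ∨ d = -1 ∨ d = 0 ∨ d = 1 ∨ 2 ≤ d := by omega
  · have : (2 * c - 1) * d < 2 * t := by nlinarith
    omega
  · omega
  · omega
  · omega
  · have : 2 * t ≤ (2 * c - 1) * d := by nlinarith
    omega

lemma representable_flipOrder_uord (inj : Function.Injective (usum m)) (hAB : Disjoint A B)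
    (hs : usum m B = usum m A + 1) (hA : A ≠ ∅) : Representable (flipOrder (uord m) A B) := by
  have hB : B ≠ ∅ := by
    rintro rfl
    simp [usum_empty] at hs
  have hc : 2 ≤ #A + #B := by
    have hA' := card_pos.2 (nonempty_iff_ne_empty.2 hA)
    have hB' := card_pos.2 (nonempty_iff_ne_empty.2 hB)
    omega
  refine representable_of_int (flipWeight m A B)
    (flipWeight_pos (pos_of_usum_injective inj) hc) fun X Y ↦ ?_
  have htilt : |tilt A B Y - tilt A B X| ≤ #A + #B :=
    abs_sub_le_iff.2 ⟨tilt_sub_tilt_le A B X Y, tilt_sub_tilt_le A B Y X⟩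
  have hzero : (usum m Y - usum m X : ℤ) = 0 → tilt A B Y - tilt A B X = 0 := fun h ↦ by
    rw [inj (show usum m Y = usum m X by omega), sub_self]
  have weight_le_iff : ∑ i ∈ X, flipWeight m A B i ≤ ∑ i ∈ Y, flipWeight m A B i ↔
      2 * (tilt A B Y - tilt A B X) ≤ (2 * (#A + #B) - 1) * (usum m Y - usum m X : ℤ) := by
    rw [sum_flipWeight, sum_flipWeight]
    constructor <;> intro h <;> linarith
  rw [weight_le_iff, two_mul_le_iff_of_abs_le (by exact_mod_cast hc) htilt hzero, flipOrder, uord,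
    flipRel_iff_tilt inj hAB hs, flipRel_iff_tilt inj hAB hs]
  omega

end Flip

section BinaryWeights

/-- The binary weights `1, 2, 4, …, 2 ^ (k - 1)`. -/
def twoPow (k : ℕ) (i : Fin k) : ℕ := 2 ^ (i : ℕ)

lemma twoPow_succ (k : ℕ) : twoPow (k + 1) = Fin.cons 1 fun i ↦ 2 * twoPow k i := by
  funext i
  cases i using Fin.cases <;> simp [twoPow, pow_succ']

lemma usum_twoPow_eq_sum_map {k : ℕ} (T : Finset (Fin k)) :
    usum (twoPow k) T = ∑ i ∈ T.map Fin.valEmbedding, 2 ^ i := by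
  simp [usum, twoPow]

lemma usum_twoPow_injective (k : ℕ) : Function.Injective (usum (twoPow k)) := by
  intro S T h
  rw [usum_twoPow_eq_sum_map, usum_twoPow_eq_sum_map] at h
  exact map_injective _ (geomSum_injective le_rfl h)

lemma usum_twoPow_lt {k : ℕ} (T : Finset (Fin k)) : usum (twoPow k) T < 2 ^ k := by
  rw [usum_twoPow_eq_sum_map]
  exact Nat.geomSum_lt le_rfl (by simp)

lemma exists_usum_twoPow_eq {k x : ℕ} (hx : x < 2 ^ k) : ∃ T, usum (twoPow k) T = x := by
  let value (T : Finset (Fin k)) : Fin (2 ^ k) := ⟨usum (twoPow k) T, usum_twoPow_lt T⟩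
  have hvalue : Function.Bijective value := by
    rw [Fintype.bijective_iff_injective_and_card]
    exact ⟨fun S T h ↦ usum_twoPow_injective k (congrArg Fin.val h), by simp⟩
  obtain ⟨T, hT⟩ := hvalue.surjective ⟨x, hx⟩
  exact ⟨T, congrArg Fin.val hT⟩

variable {k q : ℕ}

lemma usum_two_mul (w : Fin k → ℕ) (T : Finset (Fin k)) :
    usum (fun i ↦ 2 * w i) T = 2 * usum w T :=
  (mul_sum T w 2).symm

lemma usum_cons (q : ℕ) (w : Fin k → ℕ) (A : Finset (Fin (k + 1))) :
    usum (Fin.cons q w : Fin (k + 1) → ℕ) A =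
      (if 0 ∈ A then q else 0) + usum w {i | i.succ ∈ A} := by
  rw [usum, usum, sum_filter, ← sum_ite_mem_eq A, Fin.sum_univ_succ]
  simp

lemma usum_cons_two_mul_injective {w : Fin k → ℕ} (hq : Odd q)
    (inj : Function.Injective (usum w)) :
    Function.Injective (usum (Fin.cons q fun i ↦ 2 * w i : Fin (k + 1) → ℕ)) := by
  intro A B h
  obtain ⟨N, rfl⟩ := hq
  simp only [usum_cons, usum_two_mul] at h
  have hhead : 0 ∈ A ↔ 0 ∈ B := by
    split_ifs at h <;> first | omega | simp [*]
  have htail : ({i | i.succ ∈ A} : Finset (Fin k)) = ({i | i.succ ∈ B} : Finset (Fin k)) := by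
    refine inj ?_
    simp only [hhead] at h
    omega
  ext i
  cases i using Fin.cases with
  | zero => exact hhead
  | succ j => simpa using Finset.ext_iff.1 htail j

/-- The weights `q, 2, 4, …, 2 ^ k`. -/
def binaryWeights (k q : ℕ) : Fin (k + 1) → ℕ := Fin.cons q fun i ↦ 2 * twoPow k i

lemma usum_binaryWeights_injective (hq : Odd q) :
    Function.Injective (usum (binaryWeights k q)) :=
  usum_cons_two_mul_injective hq (usum_twoPow_injective k)

lemma exists_usum_binaryWeights (A : Finset (Fin (k + 1))) :
    ∃ x < 2 ^ k, usum (binaryWeights k q) A = (if 0 ∈ A then q else 0) + 2 * x :=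
  ⟨_, usum_twoPow_lt _, by rw [binaryWeights, usum_cons, usum_two_mul]⟩

lemma exists_usum_binaryWeights_eq_two_mul (q : ℕ) {x : ℕ} (hx : x < 2 ^ k) :
    ∃ C, usum (binaryWeights k q) C = 2 * x := by
  obtain ⟨T, rfl⟩ := exists_usum_twoPow_eq hx
  exact ⟨T.map (Fin.succEmb k), by simp [binaryWeights, usum_cons, usum_two_mul]⟩

lemma exists_usum_binaryWeights_eq_add_two_mul (q : ℕ) {x : ℕ} (hx : x < 2 ^ k) :
    ∃ C, usum (binaryWeights k q) C = q + 2 * x := by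
  obtain ⟨T, rfl⟩ := exists_usum_twoPow_eq hx
  exact ⟨insert 0 (T.map (Fin.succEmb k)), by simp [binaryWeights, usum_cons, usum_two_mul]⟩

lemma Flippable.usum_binaryWeights_eq (hq : Odd q) (hqk : q ≤ 2 ^ k) {A B : Finset (Fin (k + 1))}
    (h : Flippable (uord (binaryWeights k q)) A B) :
    usum (binaryWeights k q) B = usum (binaryWeights k q) A + 1 := by
  have inj := usum_binaryWeights_injective (k := k) hq
  have hlt := h.usum_lt inj
  have not_between (C) := h.not_between inj (disjoint_empty_left _) C
  simp only [usum_empty, add_zero] at not_between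
  obtain ⟨a, ha, hA⟩ := exists_usum_binaryWeights (q := q) A
  obtain ⟨b, hb, hB⟩ := exists_usum_binaryWeights (q := q) B
  obtain ⟨N, rfl⟩ := hq
  by_contra hne
  by_cases h0A : 0 ∈ A
  · have h0B : 0 ∉ B := disjoint_left.1 h.1.1 h0A
    simp only [h0A, h0B, if_true, if_false] at hA hB
    obtain ⟨C, hC⟩ := exists_usum_binaryWeights_eq_two_mul (2 * N + 1)
      (show N + a + 1 < 2 ^ k by omega)
    exact not_between C (by omega)
  simp only [h0A, if_false] at hA
  by_cases hNa : N ≤ a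
  · obtain ⟨C, hC⟩ := exists_usum_binaryWeights_eq_add_two_mul (2 * N + 1)
      (show a - N < 2 ^ k by omega)
    exact not_between C (by omega)
  by_cases h0B : 0 ∈ B
  · simp only [h0B, if_true] at hB
    obtain ⟨C, hC⟩ := exists_usum_binaryWeights_eq_two_mul (2 * N + 1)
      (show a + 1 < 2 ^ k by omega)
    exact not_between C (by omega)
  · -- No odd sum is as small as `usum A + 1`, so shift both sets by the first atom.
    have h0 : usum (binaryWeights k (2 * N + 1)) {0} = 2 * N + 1 := by simp [usum, binaryWeights]
    simp only [h0B, if_false] at hB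
    obtain ⟨C, hC⟩ := exists_usum_binaryWeights_eq_two_mul (2 * N + 1)
      (show N + a + 1 < 2 ^ k by omega)
    exact h.not_between inj (D := {0}) (by simp [h0A, h0B]) C (by omega)

lemma flippable_uord_binaryWeights_iff (hq : Odd q) (hqk : q ≤ 2 ^ k)
    {A B : Finset (Fin (k + 1))} :
    Flippable (uord (binaryWeights k q)) A B ↔
      Disjoint A B ∧ usum (binaryWeights k q) B = usum (binaryWeights k q) A + 1 :=
  ⟨fun h ↦ ⟨h.1.1, h.usum_binaryWeights_eq hq hqk⟩, fun ⟨hAB, hs⟩ ↦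
    flippable_of_usum_eq_add_one (usum_binaryWeights_injective hq) hAB hs⟩

end BinaryWeights

section SignedSums

variable {n : ℕ}

/-- The sum of the weights `m` with signs `v`. Sign vectors encode ordered pairs of disjoint sets,
see `signParts`. -/
def signedSum (m : Fin n → ℕ) (v : Fin n → SignType) : ℤ := ∑ i, (v i : ℤ) * m i

/-- The number of ways to write `N` as a signed sum of the weights `m`. -/
def signedSumCount (m : Fin n → ℕ) (N : ℤ) : ℕ := #{v | signedSum m v = N}

/-- The pair of disjoint sets encoded by a sign vector: the negative part, then the positive
part. -/
def signParts (v : Fin n → SignType) : Finset (Fin n) × Finset (Fin n) :=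
  (univ.filter fun i ↦ v i = -1, univ.filter fun i ↦ v i = 1)

/-- The sign vector encoding a pair of disjoint sets. -/
def signVector (p : Finset (Fin n) × Finset (Fin n)) (i : Fin n) : SignType :=
  if i ∈ p.1 then -1 else if i ∈ p.2 then 1 else 0

lemma disjoint_signParts (v : Fin n → SignType) : Disjoint (signParts v).1 (signParts v).2 :=
  disjoint_filter.2 fun i _ hneg hpos ↦ absurd (hneg.symm.trans hpos) (by decide)

lemma signVector_signParts (v : Fin n → SignType) : signVector (signParts v) = v := by
  funext i
  cases h : v i <;> simp [signVector, signParts, h]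

lemma signParts_signVector {p : Finset (Fin n) × Finset (Fin n)} (hp : Disjoint p.1 p.2) :
    signParts (signVector p) = p := by
  ext i
  · simp only [signParts, mem_filter_univ]
    unfold signVector
    split_ifs <;> simp [*]
  · have hi : i ∈ p.1 → i ∉ p.2 := fun h ↦ disjoint_left.1 hp h
    simp only [signParts, mem_filter_univ]
    unfold signVector
    split_ifs <;> simp_all

lemma signedSum_eq_usum_sub_usum (m : Fin n → ℕ) (v : Fin n → SignType) :
    signedSum m v = usum m (signParts v).2 - usum m (signParts v).1 := by
  simp only [signedSum, usum, signParts, Nat.cast_sum, sum_filter, ← sum_sub_distrib]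
  refine sum_congr rfl fun i _ ↦ ?_
  cases v i <;> simp

lemma ncard_disjoint_pairs_eq_signedSumCount (m : Fin n → ℕ) (N : ℤ) :
    {p : Finset (Fin n) × Finset (Fin n) |
      Disjoint p.1 p.2 ∧ (usum m p.2 - usum m p.1 : ℤ) = N}.ncard = signedSumCount m N := by
  rw [signedSumCount, ← Set.ncard_coe_finset]
  refine Set.ncard_congr (fun p _ ↦ signVector p) ?_ ?_ ?_
  · rintro p ⟨hp, hN⟩
    simpa [signedSum_eq_usum_sub_usum, signParts_signVector hp] using hN
  · rintro p p' ⟨hp, -⟩ ⟨hp', -⟩ h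
    rw [← signParts_signVector hp, h, signParts_signVector hp']
  · intro v hv
    refine ⟨signParts v, ⟨disjoint_signParts v, ?_⟩, signVector_signParts v⟩
    simpa [signedSum_eq_usum_sub_usum] using hv

lemma signedSum_neg (m : Fin n → ℕ) (v : Fin n → SignType) :
    signedSum m (-v) = -signedSum m v := by
  simp [signedSum]

lemma signedSumCount_neg (m : Fin n → ℕ) (N : ℤ) :
    signedSumCount m (-N) = signedSumCount m N :=
  card_equiv (Equiv.neg _) fun v ↦ by simp [signedSum_neg, neg_eq_iff_eq_neg]

lemma signedSum_cons (q : ℕ) (w : Fin n → ℕ) (s : SignType) (v : Fin n → SignType) :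
    signedSum (Fin.cons q w : Fin (n + 1) → ℕ) (Fin.cons s v : Fin (n + 1) → SignType) =
      s * q + signedSum w v := by
  simp [signedSum, Fin.sum_univ_succ]

lemma signedSumCount_cons (q : ℕ) (w : Fin n → ℕ) (N : ℤ) :
    signedSumCount (Fin.cons q w : Fin (n + 1) → ℕ) N =
      signedSumCount w N + signedSumCount w (N + q) + signedSumCount w (N - q) := by
  have hfiber (s : SignType) :
      #{v | (s : ℤ) * q + signedSum w v = N} = signedSumCount w (N - s * q) := by
    simp only [signedSumCount, eq_sub_iff_add_eq']
  have huniv : (univ : Finset SignType) = {0, -1, 1} := rfl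
  calc signedSumCount (Fin.cons q w : Fin (n + 1) → ℕ) N
      = ∑ s : SignType, #{v | (s : ℤ) * q + signedSum w v = N} := by
        simp only [signedSumCount, card_filter]
        rw [← (Fin.consEquiv fun _ : Fin (n + 1) ↦ SignType).sum_comp, Fintype.sum_prod_type]
        refine sum_congr rfl fun s _ ↦ sum_congr rfl fun v _ ↦ ?_
        rw [← signedSum_cons]
        rfl
    _ = signedSumCount w N + signedSumCount w (N + q) + signedSumCount w (N - q) := by
        simp only [hfiber]
        rw [huniv, sum_insert (by decide), sum_insert (by decide), sum_singleton]
        simp [add_assoc]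

lemma signedSum_two_mul (w : Fin n → ℕ) (v : Fin n → SignType) :
    signedSum (fun i ↦ 2 * w i) v = 2 * signedSum w v := by
  simp [signedSum, mul_sum, mul_left_comm]

lemma signedSumCount_two_mul (w : Fin n → ℕ) (N : ℤ) :
    signedSumCount (fun i ↦ 2 * w i) (2 * N) = signedSumCount w N := by
  simp [signedSumCount, signedSum_two_mul]

lemma signedSumCount_two_mul_of_odd (w : Fin n → ℕ) {N : ℤ} (hN : Odd N) :
    signedSumCount (fun i ↦ 2 * w i) N = 0 := by
  rw [signedSumCount, card_eq_zero, filter_eq_empty_iff]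
  rintro v - rfl
  rw [signedSum_two_mul] at hN
  exact Int.not_odd_iff_even.2 (even_two_mul _) hN

lemma signedSumCount_cons_two_mul_comm {a b : ℕ} (ha : Odd a) (hb : Odd b) (w : Fin n → ℕ) :
    signedSumCount (Fin.cons a fun i ↦ 2 * w i : Fin (n + 1) → ℕ) b =
      signedSumCount (Fin.cons b fun i ↦ 2 * w i : Fin (n + 1) → ℕ) a := by
  have hw (N : ℕ) (hN : Odd N) : signedSumCount (fun i ↦ 2 * w i) N = 0 :=
    signedSumCount_two_mul_of_odd w (by exact_mod_cast hN)
  rw [signedSumCount_cons, signedSumCount_cons, hw a ha, hw b hb, ← neg_sub (a : ℤ),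
    signedSumCount_neg, add_comm (b : ℤ)]

lemma signedSumCount_twoPow_two_mul (k : ℕ) (M : ℤ) :
    signedSumCount (twoPow (k + 1)) (2 * M) = signedSumCount (twoPow k) M := by
  rw [twoPow_succ, signedSumCount_cons, signedSumCount_two_mul,
    signedSumCount_two_mul_of_odd _ (by simp), signedSumCount_two_mul_of_odd _ (by simp),
    add_zero, add_zero]

lemma signedSumCount_twoPow_two_mul_add_unit (k : ℕ) (M : ℤ) (e : ℤˣ) :
    signedSumCount (twoPow (k + 1)) (2 * M + e) =
      signedSumCount (twoPow k) M + signedSumCount (twoPow k) (M + e) := by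
  rw [twoPow_succ, signedSumCount_cons]
  have hodd : Odd (2 * M + e) :=
    (even_two_mul M).add_odd (by obtain rfl | rfl := Int.units_eq_one_or e <;> decide)
  rw [signedSumCount_two_mul_of_odd _ hodd, zero_add]
  obtain rfl | rfl := Int.units_eq_one_or e
  · rw [show 2 * M + ((1 : ℤˣ) : ℤ) + (1 : ℕ) = 2 * (M + 1) by push_cast; ring,
      show 2 * M + ((1 : ℤˣ) : ℤ) - (1 : ℕ) = 2 * M by push_cast; ring,
      signedSumCount_two_mul, signedSumCount_two_mul, add_comm, Units.val_one]
  · rw [show 2 * M + ((-1 : ℤˣ) : ℤ) + (1 : ℕ) = 2 * M by push_cast; ring,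
      show 2 * M + ((-1 : ℤˣ) : ℤ) - (1 : ℕ) = 2 * (M + (-1 : ℤˣ)) by push_cast; ring,
      signedSumCount_two_mul, signedSumCount_two_mul]

lemma ncard_flippablePairs_uord_binaryWeights {k q : ℕ} (hq : Odd q) (hqk : q ≤ 2 ^ k) :
    (FlippablePairs (uord (binaryWeights k q))).ncard = signedSumCount (twoPow (k + 1)) q := by
  calc (FlippablePairs (uord (binaryWeights k q))).ncard
      = signedSumCount (binaryWeights k q) (1 : ℕ) := by
        rw [← ncard_disjoint_pairs_eq_signedSumCount]
        simp only [FlippablePairs, flippable_uord_binaryWeights_iff hq hqk]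
        congr! 4
        omega
    _ = signedSumCount (twoPow (k + 1)) q := by
        rw [twoPow_succ, binaryWeights, signedSumCount_cons_two_mul_comm hq odd_one]

end SignedSums

section Jacobsthal

/-- The Jacobsthal numbers `0, 1, 1, 3, 5, 11, …`. The choice `q = jacobsthal (k + 1)` in
`binaryWeights k q` yields a Fibonacci number of flippable pairs. -/
def jacobsthal : ℕ → ℕ
  | 0 => 0
  | 1 => 1
  | n + 2 => jacobsthal (n + 1) + 2 * jacobsthal n

lemma odd_jacobsthal_succ (n : ℕ) : Odd (jacobsthal (n + 1)) := by
  induction n with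
  | zero => exact odd_one
  | succ n ih => exact ih.add_even (even_two_mul _)

lemma jacobsthal_succ_add_jacobsthal (n : ℕ) : jacobsthal (n + 1) + jacobsthal n = 2 ^ n := by
  induction n with
  | zero => rfl
  | succ n ih =>
    rw [jacobsthal, pow_succ]
    omega

lemma jacobsthal_succ (n : ℕ) :
    (jacobsthal (n + 1) : ℤ) = 2 * jacobsthal n + ((-1) ^ n : ℤˣ) := by
  induction n with
  | zero => rfl
  | succ n ih =>
    rw [jacobsthal, pow_succ]
    push_cast at ih ⊢
    linarith

lemma signedSumCount_twoPow_jacobsthal (n : ℕ) :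
    signedSumCount (twoPow n) (jacobsthal n) = Nat.fib (n + 1) := by
  induction n using Nat.twoStepInduction with
  | zero => rfl
  | one => rfl
  | more n ih₀ ih₁ =>
    have hsum : (jacobsthal (n + 1) + ((-1) ^ (n + 1) : ℤˣ) : ℤ) = 2 * jacobsthal n := by
      rw [jacobsthal_succ, pow_succ]
      push_cast
      ring
    rw [jacobsthal_succ, signedSumCount_twoPow_two_mul_add_unit, hsum,
      signedSumCount_twoPow_two_mul, ih₀, ih₁, Nat.fib_add_two (n := n + 1), add_comm]

end Jacobsthal

theorem stmt3_general {n : ℕ} (hn : n ≠ 0) :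
    ∃ le : Finset (Fin n) → Finset (Fin n) → Prop,
      IsCPO le ∧ Representable le ∧
      (FlippablePairs le).ncard = Nat.fib (n + 1) ∧
      ∀ A B : Finset (Fin n), Flippable le A B → A ≠ ∅ →
        Representable (flipOrder le A B) := by
  obtain ⟨k, rfl⟩ := Nat.exists_eq_succ_of_ne_zero hn
  have hodd := odd_jacobsthal_succ k
  have hle : jacobsthal (k + 1) ≤ 2 ^ k := Nat.le.intro (jacobsthal_succ_add_jacobsthal k)
  have inj := usum_binaryWeights_injective (k := k) hodd
  refine ⟨uord (binaryWeights k (jacobsthal (k + 1))), isCPO_uord inj, representable_uord inj,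
    ?_, fun A B hflip hA ↦ ?_⟩
  · rw [ncard_flippablePairs_uord_binaryWeights hodd hle, signedSumCount_twoPow_jacobsthal]
  · obtain ⟨hAB, hs⟩ := (flippable_uord_binaryWeights_iff hodd hle).1 hflip
    exact representable_flipOrder_uord inj hAB hs hA

/-- For every `n ≥ 4` there is a representable comparative probability order on
`[n]` with exactly `F_{n+1}` flippable pairs, all of whose flips (over flippable
pairs with `A ≠ ∅`) give representable orders. -/
theorem stmt3 {n : ℕ} (hn : 4 ≤ n) :
    ∃ le : Finset (Fin n) → Finset (Fin n) → Prop,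
      IsCPO le ∧ Representable le ∧
      (FlippablePairs le).ncard = Nat.fib (n + 1) ∧
      ∀ A B : Finset (Fin n), Flippable le A B → A ≠ ∅ →
        Representable (flipOrder le A B) :=
  stmt3_general (by omega)
end

section
/- Let q be an odd positive integer with q < 2ⁿ, let j be the integer with 2^{j−1} ≤ q < 2^j, and define the utility vector m on [n+1] by m_i = 2^i for 1 ≤ i ≤ j−1, m_j = q, and m_i = 2^{i−1} for j+1 ≤ i ≤ n+1. Write u(A) = ∑_{i∈A} m_i. Then for every nonempty subset B ⊆ [n+1] there exists a subset A ⊆ [n+1] with 0 < u(B) − u(A) ≤ 2. Consequently, any two consecutive subsets in the order ≼_m (A ≼_m B ⇔ u(A) ≤ u(B)) have utilities differing by at most 2. -/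
open Finset

/-- The utility vector on `[n+1]` (element `k` corresponds to index `k-1`):
`m_k = 2^k` for `k < j`, `m_j = q`, and `m_k = 2^(k-1)` for `k > j`. -/
def mq (n q j : ℕ) : Fin (n + 1) → ℕ := fun i =>
  if (i : ℕ) + 1 < j then 2 ^ ((i : ℕ) + 1)
  else if (i : ℕ) + 1 = j then q
  else 2 ^ (i : ℕ)

/-!
If positive weights `m₁, m₂, …` satisfy `mᵢ ≤ (m₁ + ⋯ + mᵢ₋₁) + d` for all `i`, then consecutive
subset sums differ by at most `d`: when the `i`-th weight is added, the subset sums are joined by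
their translates by `mᵢ`, and the two families together leave no gap longer than `d`. The utility
vector `mq n q j` satisfies this criterion with `d = 2`: up to position `j` the `i`-th weight is at
most `2 ^ i` and the earlier ones are `2, 4, …, 2 ^ (i - 1)`, with sum `2 ^ i - 2`; after position
`j` each weight `2 ^ (i - 1)` is preceded by weights that dominate `1, 2, …, 2 ^ (i - 2)`.
-/

theorem exists_subset_sum_lt_and_le_sum_add {ι M : Type*} [LinearOrder ι] [AddCommMonoid M]
    [LinearOrder M] [IsOrderedCancelAddMonoid M] [ExistsAddOfLE M] {m : ι → M} {d : M}
    {s : Finset ι} (hm : ∀ i ∈ s, m i ≤ ∑ l ∈ s with l < i, m l + d) {t : M} (ht0 : 0 < t)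
    (ht : t ≤ ∑ i ∈ s, m i + d) :
    ∃ A ⊆ s, ∑ i ∈ A, m i < t ∧ t ≤ ∑ i ∈ A, m i + d := by
  induction s using Finset.induction_on_max generalizing t with
  | empty => exact ⟨∅, Subset.rfl, by simpa only [sum_empty] using ht0, ht⟩
  | insert a s ha ih =>
    have ha_notMem : a ∉ s := fun h => lt_irrefl a (ha a h)
    have hm_s : ∀ i ∈ s, m i ≤ ∑ l ∈ s with l < i, m l + d := fun i hi => by
      simpa only [filter_insert, if_neg (ha i hi).not_gt] using hm i (mem_insert_of_mem hi)
    have hm_a : m a ≤ ∑ l ∈ s, m l + d := by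
      simpa only [filter_insert, lt_irrefl, if_false, filter_true_of_mem ha]
        using hm a (mem_insert_self a s)
    rcases le_or_gt t (∑ l ∈ s, m l + d) with hts | hts
    · obtain ⟨A, hA, hlt, hle⟩ := ih hm_s ht0 hts
      exact ⟨A, hA.trans (subset_insert a s), hlt, hle⟩
    · obtain ⟨r, rfl⟩ := exists_add_of_le (hm_a.trans hts.le)
      have hr0 : 0 < r := pos_of_lt_add_right (hm_a.trans_lt hts)
      have hr : r ≤ ∑ l ∈ s, m l + d := by
        rwa [sum_insert ha_notMem, add_assoc, add_le_add_iff_left] at ht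
      obtain ⟨A, hA, hlt, hle⟩ := ih hm_s hr0 hr
      refine ⟨insert a A, insert_subset_insert a hA, ?_⟩
      rw [sum_insert fun h => ha_notMem (hA h), add_assoc]
      exact ⟨by gcongr, by gcongr⟩

section UtilityGaps

variable {k d : ℕ} {m : Fin k → ℕ}

lemma usum_pos_s6 (hpos : ∀ i, 0 < m i) {B : Finset (Fin k)} (hB : B ≠ ∅) : 0 < usum m B :=
  sum_pos (fun i _ => hpos i) (nonempty_iff_ne_empty.2 hB)

lemma exists_usum_lt_and_le_usum_add (hm : ∀ i, m i ≤ ∑ l ∈ Iio i, m l + d)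
    {B : Finset (Fin k)} (hB : 0 < usum m B) :
    ∃ A, usum m A < usum m B ∧ usum m B ≤ usum m A + d := by
  have hB_le : usum m B ≤ ∑ i, m i + d :=
    (sum_le_sum_of_subset (subset_univ B)).trans (Nat.le_add_right _ _)
  obtain ⟨A, -, hA⟩ := exists_subset_sum_lt_and_le_sum_add
    (fun i _ => by simpa only [filter_gt_eq_Iio] using hm i) hB hB_le
  exact ⟨A, hA⟩

lemma cpLT_uord_of_usum_lt {A B : Finset (Fin k)} (h : usum m A < usum m B) :
    cpLT (uord m) A B :=
  ⟨h.le, fun hAB => h.ne (congrArg (usum m) hAB)⟩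

theorem stmt6_general (hpos : ∀ i, 0 < m i) (hm : ∀ i, m i ≤ ∑ l ∈ Iio i, m l + d) :
    (∀ B : Finset (Fin k), B ≠ ∅ →
      ∃ A : Finset (Fin k), usum m A < usum m B ∧ usum m B ≤ usum m A + d) ∧
    (∀ C D : Finset (Fin k), cpLT (uord m) C D →
      (¬ ∃ E, cpLT (uord m) C E ∧ cpLT (uord m) E D) →
      usum m D ≤ usum m C + d) := by
  refine ⟨fun B hB => exists_usum_lt_and_le_usum_add hm (usum_pos_s6 hpos hB),
    fun C D _ hadj => ?_⟩
  by_contra! hgap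
  obtain ⟨A, hAD, hDA⟩ := exists_usum_lt_and_le_usum_add hm (Nat.zero_lt_of_lt hgap)
  have hCA : usum m C < usum m A := by omega
  exact hadj ⟨A, cpLT_uord_of_usum_lt hCA, cpLT_uord_of_usum_lt hAD⟩

end UtilityGaps

section PowersOfTwo

variable {n q j : ℕ}

lemma sum_Iio_two_pow_add_one (i : Fin n) :
    ∑ l ∈ Iio i, 2 ^ (l : ℕ) + 1 = 2 ^ (i : ℕ) := by
  have hmap : ∑ l ∈ Iio i, 2 ^ (l : ℕ) = ∑ l ∈ range i, 2 ^ l := by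
    rw [← Nat.Iio_eq_range, ← Fin.map_valEmbedding_Iio, sum_map]
    rfl
  have hgeom : (∑ l ∈ range i, 2 ^ l) * 1 + 1 = 2 ^ (i : ℕ) := geom_sum_mul_add 1 i
  rwa [hmap, ← mul_one (∑ l ∈ range i, 2 ^ l)]

lemma two_pow_le_mq (hjq : 2 ^ (j - 1) ≤ q) (i : Fin (n + 1)) : 2 ^ (i : ℕ) ≤ mq n q j i := by
  unfold mq
  split_ifs with hlt heq
  · exact Nat.pow_le_pow_right two_pos (Nat.le_succ i)
  · rwa [← heq, Nat.add_sub_cancel] at hjq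
  · exact le_rfl

lemma mq_of_lt {i : Fin (n + 1)} (hi : (i : ℕ) + 1 < j) : mq n q j i = 2 ^ ((i : ℕ) + 1) :=
  if_pos hi

lemma mq_of_gt {i : Fin (n + 1)} (hi : j < (i : ℕ) + 1) : mq n q j i = 2 ^ (i : ℕ) := by
  rw [mq, if_neg hi.not_gt, if_neg hi.ne']

lemma mq_le_two_pow_succ (hqj : q ≤ 2 ^ j) (i : Fin (n + 1)) :
    mq n q j i ≤ 2 ^ ((i : ℕ) + 1) := by
  unfold mq
  split_ifs with hlt heq
  · exact le_rfl
  · rwa [heq]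
  · exact Nat.pow_le_pow_right two_pos (Nat.le_succ i)

lemma mq_le_sum_Iio_add_two (hjq : 2 ^ (j - 1) ≤ q) (hqj : q ≤ 2 ^ j) (i : Fin (n + 1)) :
    mq n q j i ≤ ∑ l ∈ Iio i, mq n q j l + 2 := by
  rcases le_or_gt ((i : ℕ) + 1) j with hij | hij
  · have hbelow : ∀ l ∈ Iio i, mq n q j l = 2 * 2 ^ (l : ℕ) := fun l hl => by
      have hli : l < i := mem_Iio.1 hl
      rw [mq_of_lt (by omega), pow_succ']
    calc mq n q j i ≤ 2 ^ ((i : ℕ) + 1) := mq_le_two_pow_succ hqj i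
      _ = 2 * (∑ l ∈ Iio i, 2 ^ (l : ℕ) + 1) := by rw [sum_Iio_two_pow_add_one, pow_succ']
      _ = ∑ l ∈ Iio i, mq n q j l + 2 := by rw [sum_congr rfl hbelow, ← mul_sum, mul_add_one]
  · calc mq n q j i = ∑ l ∈ Iio i, 2 ^ (l : ℕ) + 1 := by
          rw [mq_of_gt hij, sum_Iio_two_pow_add_one]
      _ ≤ ∑ l ∈ Iio i, mq n q j l + 2 :=
          add_le_add (sum_le_sum fun l _ => two_pow_le_mq hjq l) one_le_two

lemma mq_pos (hq0 : 0 < q) (i : Fin (n + 1)) : 0 < mq n q j i := by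
  unfold mq
  split_ifs <;> positivity

end PowersOfTwo

/-- For the utility vector `mq n q j`: every nonempty `B` admits an `A` with
`0 < u(B) − u(A) ≤ 2`; consequently any two consecutive subsets in `≼_m` have
utilities differing by at most 2. -/
theorem stmt6 {n q j : ℕ} (hq0 : 0 < q) (hodd : Odd q) (hqn : q < 2 ^ n)
    (hj1 : 2 ^ (j - 1) ≤ q) (hj2 : q < 2 ^ j) :
    (∀ B : Finset (Fin (n + 1)), B ≠ ∅ →
      ∃ A : Finset (Fin (n + 1)),
        usum (mq n q j) A < usum (mq n q j) B ∧
        usum (mq n q j) B ≤ usum (mq n q j) A + 2) ∧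
    (∀ C D : Finset (Fin (n + 1)), cpLT (uord (mq n q j)) C D →
      (¬ ∃ E, cpLT (uord (mq n q j)) C E ∧ cpLT (uord (mq n q j)) E D) →
      usum (mq n q j) D ≤ usum (mq n q j) C + 2) :=
  stmt6_general (mq_pos hq0) (mq_le_sum_Iio_add_two hj1 hj2.le)
end

section
/- Let q be an odd positive integer with q < 2ⁿ, let j be the integer with 2^{j−1} ≤ q < 2^j, and define the utility vector m on [n+1] by m_i = 2^i for 1 ≤ i ≤ j−1, m_j = q, and m_i = 2^{i−1} for j+1 ≤ i ≤ n+1. Write u(A) = ∑_{i∈A} m_i. Then for every integer t with q ≤ t ≤ 2^{n+1} − 2 there is exactly one subset B ⊆ [n+1] with u(B) = t, and this B contains j if and only if t is odd. In particular, in the order ≼_m, from the position of {j} up to the last subset not containing j, subsets not containing j alternate with subsets containing j, and consecutive subsets in this range have utilities differing by exactly 1. -/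
open Finset

/-!
Apart from the odd utility `q`, the utilities are `2, 4, …, 2ⁿ`, twice the powers `1, 2, …, 2ⁿ⁻¹`.
Hence the parity of `u(B)` says whether `q` is used in `B`; once that is known, the remaining even
part of `u(B)` is at most `2ⁿ⁺¹ - 2`, and the binary expansion of its half gives the rest of `B`.
-/

theorem existsUnique_usum_two_pow {n s : ℕ} (hs : s < 2 ^ n) :
    ∃! C : Finset (Fin n), usum (fun i => 2 ^ (i : ℕ)) C = s := by
  refine existsUnique_of_exists_of_unique ?_ fun C D hC hD => ?_
  · have bit_lt : ∀ i ∈ equivBitIndices s, i < n := fun i hi =>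
      (Nat.pow_lt_pow_iff_right one_lt_two).1 <|
        (Nat.two_pow_le_of_mem_bitIndices (by simpa using hi)).trans_lt hs
    refine ⟨(equivBitIndices s).attachFin bit_lt, ?_⟩
    calc usum (fun i => 2 ^ (i : ℕ)) ((equivBitIndices s).attachFin bit_lt)
        = ∑ i ∈ ((equivBitIndices s).attachFin bit_lt).map Fin.valEmbedding, 2 ^ i := by
          simp only [usum, sum_map, Fin.valEmbedding_apply]
      _ = s := by
          rw [map_valEmbedding_attachFin]
          exact equivBitIndices.symm_apply_apply s
  · apply map_injective Fin.valEmbedding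
    apply geomSum_injective le_rfl
    simpa only [usum, sum_map, Fin.valEmbedding_apply] using hC.trans hD.symm

theorem usum_const_mul {k : ℕ} (c : ℕ) (w : Fin k → ℕ) (A : Finset (Fin k)) :
    usum (fun i => c * w i) A = c * usum w A :=
  (mul_sum A w c).symm

section SuccAbovePreimage

variable {n : ℕ} (p : Fin (n + 1))

/-- The part of `B` other than `p`, renumbered as a subset of `Fin n`: the indices above `p` are
shifted down by one. It is used to separate the element `p` from the rest of a subset. -/
noncomputable def succAbovePreimage (B : Finset (Fin (n + 1))) : Finset (Fin n) :=
  B.preimage p.succAbove p.succAbove_right_injective.injOn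

@[simp]
theorem mem_succAbovePreimage {B : Finset (Fin (n + 1))} {i : Fin n} :
    i ∈ succAbovePreimage p B ↔ p.succAbove i ∈ B :=
  mem_preimage

theorem existsUnique_mem_iff_and_succAbovePreimage_eq (P : Prop) (C : Finset (Fin n)) :
    ∃! B : Finset (Fin (n + 1)), (p ∈ B ↔ P) ∧ succAbovePreimage p B = C := by
  classical
  let D : Finset (Fin (n + 1)) := {i | i = p ∧ P ∨ ∃ k ∈ C, p.succAbove k = i}
  refine ⟨D, ⟨?_, ?_⟩, ?_⟩
  · simp [D, Fin.succAbove_ne]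
  · ext i
    simp [D, Fin.succAbove_ne]
  · rintro B ⟨hP, rfl⟩
    ext i
    rcases Fin.eq_self_or_eq_succAbove p i with rfl | ⟨k, rfl⟩
    · simp [D, hP, Fin.succAbove_ne]
    · simp [D, Fin.succAbove_ne]

theorem usum_insertNth (q : ℕ) (w : Fin n → ℕ) (B : Finset (Fin (n + 1))) :
    usum (p.insertNth q w) B = (if p ∈ B then q else 0) + usum w (succAbovePreimage p B) := by
  have usum_eq {k : ℕ} (m : Fin k → ℕ) (A : Finset (Fin k)) :
      usum m A = ∑ i, if i ∈ A then m i else 0 := (Fintype.sum_ite_mem A m).symm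
  rw [usum_eq, usum_eq, Fin.sum_univ_succAbove _ p]
  simp only [Fin.insertNth_apply_same, Fin.insertNth_apply_succAbove, mem_succAbovePreimage]

variable {q t : ℕ} (w : Fin n → ℕ)

theorem odd_usum_insertNth_two_mul_iff (hq : Odd q) (B : Finset (Fin (n + 1))) :
    Odd (usum (p.insertNth q fun i => 2 * w i) B) ↔ p ∈ B := by
  rw [usum_insertNth, usum_const_mul]
  split_ifs with h <;> simp [h, hq, parity_simps]

theorem existsUnique_usum_insertNth_two_mul (hq : Odd q)
    (hC : ∃! C, (if Odd t then q else 0) + 2 * usum w C = t) :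
    ∃! B, usum (p.insertNth q fun i => 2 * w i) B = t := by
  obtain ⟨C, hC, hC_unique⟩ := hC
  refine (existsUnique_congr fun B => ?_).2
    (existsUnique_mem_iff_and_succAbovePreimage_eq p (Odd t) C)
  constructor
  · rintro rfl
    have hp := (odd_usum_insertNth_two_mul_iff p w hq B).symm
    refine ⟨hp, hC_unique _ ?_⟩
    simp only [← hp]
    rw [usum_insertNth, usum_const_mul]
  · rintro ⟨hp, rfl⟩
    simpa only [usum_insertNth, usum_const_mul, hp] using hC

end SuccAbovePreimage

theorem mq_eq_insertNth {n : ℕ} (p : Fin (n + 1)) (q : ℕ) :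
    mq n q (p + 1) = p.insertNth q fun i => 2 * 2 ^ (i : ℕ) := by
  refine Fin.eq_insertNth_iff.2 ⟨by simp [mq], funext fun i => ?_⟩
  rcases lt_or_ge i.castSucc p with h | h
  · have hi : (i : ℕ) < p := h
    simp [Fin.removeNth, Fin.succAbove_of_castSucc_lt _ _ h, mq, hi, pow_succ']
  · have hi : (p : ℕ) ≤ i := h
    simp [Fin.removeNth, Fin.succAbove_of_le_castSucc _ _ h, mq, pow_succ',
      show ¬ (i : ℕ) + 1 < p by omega, show (i : ℕ) + 1 ≠ p by omega]

theorem existsUnique_usum_mq {n q t : ℕ} (p : Fin (n + 1)) (hq : Odd q) (hqt : q ≤ t)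
    (ht : t < 2 ^ (n + 1)) : ∃! B, usum (mq n q (p + 1)) B = t := by
  rw [mq_eq_insertNth]
  apply existsUnique_usum_insertNth_two_mul p _ hq
  obtain ⟨s, hs⟩ : ∃ s, t = (if Odd t then q else 0) + 2 * s := by
    split_ifs with h
    · obtain ⟨s, hs⟩ := (Nat.Odd.sub_odd h hq).two_dvd
      exact ⟨s, by omega⟩
    · obtain ⟨s, hs⟩ := (Nat.not_odd_iff_even.1 h).two_dvd
      exact ⟨s, by omega⟩
  have hs_lt : s < 2 ^ n := by
    rw [pow_succ] at ht
    omega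
  refine (existsUnique_congr fun C => ?_).2 (existsUnique_usum_two_pow hs_lt)
  omega

theorem stmt7_general {n q j : ℕ} (hodd : Odd q) (hj : 1 ≤ j) (hjn : j ≤ n + 1) :
    ∀ t : ℕ, q ≤ t → t < 2 ^ (n + 1) →
      (∃! B : Finset (Fin (n + 1)), usum (mq n q j) B = t) ∧
      (∀ B : Finset (Fin (n + 1)), usum (mq n q j) B = t →
        ((∃ i ∈ B, (i : ℕ) + 1 = j) ↔ Odd t)) := by
  intro t hqt ht
  obtain ⟨p, rfl⟩ : ∃ p : Fin (n + 1), j = p + 1 := ⟨⟨j - 1, by omega⟩, by simp; omega⟩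
  refine ⟨existsUnique_usum_mq p hodd hqt ht, ?_⟩
  rintro B rfl
  rw [mq_eq_insertNth, odd_usum_insertNth_two_mul_iff p _ hodd]
  simp [Fin.val_inj]

/-- For the utility vector `mq n q j`: every integer `t` with
`q ≤ t ≤ 2^(n+1) − 2` is the utility of exactly one subset `B ⊆ [n+1]`, and
this `B` contains the element `j` iff `t` is odd. -/
theorem stmt7 {n q j : ℕ} (hq0 : 0 < q) (hodd : Odd q) (hqn : q < 2 ^ n)
    (hj1 : 2 ^ (j - 1) ≤ q) (hj2 : q < 2 ^ j) :
    ∀ t : ℕ, q ≤ t → t ≤ 2 ^ (n + 1) - 2 →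
      (∃! B : Finset (Fin (n + 1)), usum (mq n q j) B = t) ∧
      (∀ B : Finset (Fin (n + 1)), usum (mq n q j) B = t →
        ((∃ i ∈ B, (i : ℕ) + 1 = j) ↔ Odd t)) := by
  have hj : 1 ≤ j := Nat.pos_of_ne_zero (by rintro rfl; omega)
  have hjn : j - 1 < n := (Nat.pow_lt_pow_iff_right one_lt_two).1 (hj1.trans_lt hqn)
  exact fun t hqt ht => stmt7_general hodd hj (by omega) t hqt
    (ht.trans_lt (Nat.sub_lt (Nat.two_pow_pos _) two_pos))
end
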